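/- (Solution-dependent bound, Theorem 2.) Let Θ=×_{e∈E}[l_e,r_e] be a parameter space with minimum vector θ⁻ and maximum vector θ⁺, and let k ≥ 1. Suppose S_g ⊆ V with |S_g| = k satisfies the greedy guarantee σ_{θ⁺}(S_g) ≥ (1 − 1/e)·OPT_{θ⁺}. Then every seed set S ⊆ V with |S| = k satisfies g(Θ,S) ≥ (1 − 1/e)·σ_{θ⁻}(S)/σ_{θ⁺}(S_g). In particular, any set S^LU of size k with σ_{θ⁻}(S^LU) ≥ σ_{θ⁻}(S_g) satisfies g(Θ,S^LU) ≥ α(Θ)·(1−1/e), where α(Θ) = σ_{θ⁻}(S^LU)/σ_{θ⁺}(S_g). -/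

import Mathlib

/-!
The spread `σ_θ(S)` is the expectation of `|R_L(S)|`, a nondecreasing function of the random edge
set `L`. Conditioning on one edge at a time shows that such an expectation is nondecreasing in `θ`
(`sum_liveProb_mul_mono`), hence so are `σ_θ(S)` and `OPT_θ`. Therefore, for every `θ` in the box,
`σ_θ(S) / OPT_θ ≥ σ_{θ⁻}(S) / OPT_{θ⁺}`, and the greedy guarantee bounds
`1 / OPT_{θ⁺}` below by `(1 − 1/e) / σ_{θ⁺}(S_g)`. All denominators are positive because
`σ_θ(T) ≥ |T|` (`card_le_spread`). The infimum is over a nonempty set, as it contains the value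
at `θ⁻`.
-/

noncomputable def reachSet {V : Type*} [Fintype V] [DecidableEq V]
    (L : Finset (V × V)) (S : Finset V) : Finset V :=
  @Finset.filter V
    (fun v => ∃ s ∈ S, Relation.ReflTransGen (fun a b : V => (a, b) ∈ L) s v)
    (fun _ => Classical.propDecidable _) Finset.univ

noncomputable def liveProb {V : Type*} [DecidableEq V]
    (E : Finset (V × V)) (θ : V × V → ℝ) (L : Finset (V × V)) : ℝ :=
  (∏ e ∈ L, θ e) * ∏ e ∈ E \ L, (1 - θ e)

noncomputable def spread {V : Type*} [Fintype V] [DecidableEq V]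
    (E : Finset (V × V)) (θ : V × V → ℝ) (S : Finset V) : ℝ :=
  ∑ L ∈ E.powerset, liveProb E θ L * (reachSet L S).card

noncomputable def OPT {V : Type*} [Fintype V] [DecidableEq V]
    (E : Finset (V × V)) (θ : V × V → ℝ) (k : ℕ) : ℝ :=
  sSup {x : ℝ | ∃ T : Finset V, T.card = k ∧ x = spread E θ T}

noncomputable def robustRatio {V : Type*} [Fintype V] [DecidableEq V]
    (E : Finset (V × V)) (l r : V × V → ℝ) (k : ℕ) (S : Finset V) : ℝ :=
  sInf {x : ℝ | ∃ θ : V × V → ℝ, (∀ e ∈ E, l e ≤ θ e ∧ θ e ≤ r e) ∧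
    x = spread E θ S / OPT E θ k}

/-- Conditioning on the edge `a`: absent with probability `1 - θ a`, present with probability
`θ a`. -/
lemma sum_liveProb_insert {V : Type*} [DecidableEq V] {a : V × V} {E : Finset (V × V)}
    (ha : a ∉ E) (θ : V × V → ℝ) (F : Finset (V × V) → ℝ) :
    ∑ L ∈ (insert a E).powerset, liveProb (insert a E) θ L * F L =
      (1 - θ a) * ∑ L ∈ E.powerset, liveProb E θ L * F L +
        θ a * ∑ L ∈ E.powerset, liveProb E θ L * F (insert a L) := by
  rw [Finset.sum_powerset_insert ha, Finset.mul_sum, Finset.mul_sum]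
  congr 1 <;> refine Finset.sum_congr rfl fun L hL => ?_
  · have haL : a ∉ L := fun h => ha (Finset.mem_powerset.1 hL h)
    have h : a ∉ E \ L := fun h => ha (Finset.mem_sdiff.1 h).1
    rw [liveProb, liveProb, Finset.insert_sdiff_of_notMem _ haL, Finset.prod_insert h]
    ring
  · have haL : a ∉ L := fun h => ha (Finset.mem_powerset.1 hL h)
    have h : insert a E \ insert a L = E \ L := by
      ext x
      simp only [Finset.mem_sdiff, Finset.mem_insert]
      grind
    rw [liveProb, liveProb, h, Finset.prod_insert haL]
    ring

lemma liveProb_nonneg {V : Type*} [DecidableEq V] {E L : Finset (V × V)} (hL : L ⊆ E)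
    {θ : V × V → ℝ} (h : ∀ e ∈ E, 0 ≤ θ e ∧ θ e ≤ 1) : 0 ≤ liveProb E θ L :=
  mul_nonneg (Finset.prod_nonneg fun e he => (h e (hL he)).1)
    (Finset.prod_nonneg fun e he => sub_nonneg.2 (h e (Finset.mem_sdiff.1 he).1).2)

lemma sum_liveProb {V : Type*} [DecidableEq V] (E : Finset (V × V)) (θ : V × V → ℝ) :
    ∑ L ∈ E.powerset, liveProb E θ L = 1 := by
  simp [liveProb, ← Finset.prod_add]

/-- The expectation of a nondecreasing function of the live-edge graph is nondecreasing in the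
edge probabilities. -/
lemma sum_liveProb_mul_mono {V : Type*} [DecidableEq V] (E : Finset (V × V))
    (θ θ' : V × V → ℝ) (h : ∀ e ∈ E, 0 ≤ θ e ∧ θ e ≤ θ' e ∧ θ' e ≤ 1)
    (F : Finset (V × V) → ℝ) (hF : Monotone F) :
    ∑ L ∈ E.powerset, liveProb E θ L * F L ≤ ∑ L ∈ E.powerset, liveProb E θ' L * F L := by
  induction E using Finset.induction_on generalizing F with
  | empty => simp [liveProb]
  | insert a E ha ih =>
    rw [sum_liveProb_insert ha, sum_liveProb_insert ha]
    have hE : ∀ e ∈ E, 0 ≤ θ e ∧ θ e ≤ θ' e ∧ θ' e ≤ 1 :=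
      fun e he => h e (Finset.mem_insert_of_mem he)
    obtain ⟨h0, h1, h2⟩ := h a (Finset.mem_insert_self a E)
    have hA := ih hE F hF
    have hB := ih hE (fun L => F (insert a L))
      fun L M hLM => hF (Finset.insert_subset_insert a hLM)
    have hAB : ∑ L ∈ E.powerset, liveProb E θ' L * F L ≤
        ∑ L ∈ E.powerset, liveProb E θ' L * F (insert a L) :=
      Finset.sum_le_sum fun L hL => mul_le_mul_of_nonneg_left
        (hF (Finset.subset_insert a L)) (liveProb_nonneg (Finset.mem_powerset.1 hL)
          fun e he => ⟨(hE e he).1.trans (hE e he).2.1, (hE e he).2.2⟩)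
    -- First improve both conditional expectations, then shift weight to the larger one.
    linarith [mul_le_mul_of_nonneg_left hA (by linarith : 0 ≤ 1 - θ a),
      mul_le_mul_of_nonneg_left hB h0, mul_le_mul_of_nonneg_left hAB (sub_nonneg.2 h1)]

lemma reachSet_mono {V : Type*} [Fintype V] [DecidableEq V] {L M : Finset (V × V)} (h : L ⊆ M)
    (S : Finset V) : reachSet L S ⊆ reachSet M S := by
  intro v hv
  simp only [reachSet, Finset.mem_filter, Finset.mem_univ, true_and] at hv ⊢
  obtain ⟨s, hs, hr⟩ := hv
  exact ⟨s, hs, Relation.ReflTransGen.mono (fun _ _ hab => h hab) _ _ hr⟩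

lemma subset_reachSet {V : Type*} [Fintype V] [DecidableEq V] (L : Finset (V × V))
    (S : Finset V) : S ⊆ reachSet L S := by
  intro v hv
  simp only [reachSet, Finset.mem_filter, Finset.mem_univ, true_and]
  exact ⟨v, hv, Relation.ReflTransGen.refl⟩

lemma spread_mono {V : Type*} [Fintype V] [DecidableEq V] {E : Finset (V × V)}
    {θ θ' : V × V → ℝ} (h : ∀ e ∈ E, 0 ≤ θ e ∧ θ e ≤ θ' e ∧ θ' e ≤ 1) (S : Finset V) :
    spread E θ S ≤ spread E θ' S :=
  sum_liveProb_mul_mono E θ θ' h (fun L => ((reachSet L S).card : ℝ))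
    fun _ _ hLM => Nat.cast_le.2 (Finset.card_le_card (reachSet_mono hLM S))

lemma card_le_spread {V : Type*} [Fintype V] [DecidableEq V] {E : Finset (V × V)}
    {θ : V × V → ℝ} (h : ∀ e ∈ E, 0 ≤ θ e ∧ θ e ≤ 1) (S : Finset V) :
    (S.card : ℝ) ≤ spread E θ S := by
  calc (S.card : ℝ) = ∑ L ∈ E.powerset, liveProb E θ L * S.card := by
        rw [← Finset.sum_mul, sum_liveProb, one_mul]
    _ ≤ spread E θ S := Finset.sum_le_sum fun L hL => mul_le_mul_of_nonneg_left
        (Nat.cast_le.2 (Finset.card_le_card (subset_reachSet L S)))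
        (liveProb_nonneg (Finset.mem_powerset.1 hL) h)

/-- The supremum defining `OPT` is over a finite set of values, so it bounds each of them. -/
lemma spread_le_OPT {V : Type*} [Fintype V] [DecidableEq V] (E : Finset (V × V))
    (θ : V × V → ℝ) {k : ℕ} {T : Finset V} (hT : T.card = k) : spread E θ T ≤ OPT E θ k := by
  refine le_csSup (Set.Finite.bddAbove ?_) ⟨T, hT, rfl⟩
  refine (Set.finite_range (spread E θ)).subset ?_
  rintro x ⟨T, -, rfl⟩
  exact ⟨T, rfl⟩

/-- Theorem 2, solution-dependent bound: if `S_g` of size `k` satisfies the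
greedy guarantee `σ_{θ⁺}(S_g) ≥ (1 − 1/e)·OPT_{θ⁺}`, then every size-`k` set `S` satisfies
`g(Θ,S) ≥ (1 − 1/e)·σ_{θ⁻}(S)/σ_{θ⁺}(S_g)`; in particular any size-`k` set `S^LU` with
`σ_{θ⁻}(S^LU) ≥ σ_{θ⁻}(S_g)` satisfies `g(Θ,S^LU) ≥ α(Θ)·(1 − 1/e)`. -/
theorem lugreedy_solution_dependent_bound {V : Type*} [Fintype V] [DecidableEq V]
    (E : Finset (V × V)) (l r : V × V → ℝ)
    (hlr : ∀ e ∈ E, 0 ≤ l e ∧ l e ≤ r e ∧ r e ≤ 1)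
    (k : ℕ) (hk : 1 ≤ k)
    (Sg : Finset V) (hSgcard : Sg.card = k)
    (hgreedy : (1 - 1 / Real.exp 1) * OPT E r k ≤ spread E r Sg) :
    (∀ S : Finset V, S.card = k →
      (1 - 1 / Real.exp 1) * (spread E l S / spread E r Sg) ≤ robustRatio E l r k S) ∧
    (∀ SLU : Finset V, SLU.card = k → spread E l Sg ≤ spread E l SLU →
      (spread E l SLU / spread E r Sg) * (1 - 1 / Real.exp 1) ≤
        robustRatio E l r k SLU) := by
  have main : ∀ S : Finset V, S.card = k →
      (1 - 1 / Real.exp 1) * (spread E l S / spread E r Sg) ≤ robustRatio E l r k S := by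
    intro S hS
    have hkR : (1 : ℝ) ≤ k := by exact_mod_cast hk
    have hr : ∀ e ∈ E, 0 ≤ r e ∧ r e ≤ 1 := fun e he =>
      ⟨(hlr e he).1.trans (hlr e he).2.1, (hlr e he).2.2⟩
    have hl : ∀ e ∈ E, 0 ≤ l e ∧ l e ≤ 1 := fun e he =>
      ⟨(hlr e he).1, (hlr e he).2.1.trans (hlr e he).2.2⟩
    have hSg : 0 < spread E r Sg := by
      have := card_le_spread hr Sg
      rw [hSgcard] at this
      linarith
    have hlS : 0 ≤ spread E l S := (Nat.cast_nonneg _).trans (card_le_spread hl S)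
    have hc : 0 ≤ 1 - 1 / Real.exp 1 := by
      have : 1 / Real.exp 1 ≤ 1 :=
        (div_le_one (Real.exp_pos 1)).2 (Real.one_le_exp zero_le_one)
      linarith
    refine le_csInf ⟨_, l, fun e he => ⟨le_rfl, (hlr e he).2.1⟩, rfl⟩ ?_
    rintro x ⟨θ, hθ, rfl⟩
    have hlow : spread E l S ≤ spread E θ S := spread_mono (fun e he =>
      ⟨(hlr e he).1, (hθ e he).1, (hθ e he).2.trans (hlr e he).2.2⟩) S
    have hθ0 : ∀ e ∈ E, 0 ≤ θ e := fun e he => (hlr e he).1.trans (hθ e he).1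
    have hopt : OPT E θ k ≤ OPT E r k := by
      refine csSup_le ⟨_, Sg, hSgcard, rfl⟩ ?_
      rintro x ⟨T, hT, rfl⟩
      exact (spread_mono (fun e he => ⟨hθ0 e he, (hθ e he).2, (hlr e he).2.2⟩) T).trans
        (spread_le_OPT E r hT)
    have hpos : 0 < OPT E θ k := by
      have h1 := card_le_spread (fun e he => ⟨hθ0 e he, (hθ e he).2.trans (hr e he).2⟩) Sg
      rw [hSgcard] at h1
      linarith [spread_le_OPT E θ hSgcard]
    rw [← mul_div_assoc, div_le_div_iff₀ hSg hpos]
    calc (1 - 1 / Real.exp 1) * spread E l S * OPT E θ k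
        = spread E l S * ((1 - 1 / Real.exp 1) * OPT E θ k) := by ring
      _ ≤ spread E l S * spread E r Sg := mul_le_mul_of_nonneg_left
          ((mul_le_mul_of_nonneg_left hopt hc).trans hgreedy) hlS
      _ ≤ spread E θ S * spread E r Sg := mul_le_mul_of_nonneg_right hlow hSg.le
  refine ⟨main, fun SLU hSLU _ => ?_⟩
  rw [mul_comm]
  exact main SLU hSLU
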